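/- Let (G, ψ_0) be a graph with continuous attributes ψ_0 : V → ℝ^{q_0}, let α > 0, and let κ(x, y) = exp(−(α/2)‖x − y‖²) be the Gaussian kernel on ℝ^{q_0}. Fix k ≥ 1 and anchor points z_1, …, z_{q_1}, where each z_i = (z_i^{(1)}, …, z_i^{(k+1)}) is a sequence of k+1 vectors in ℝ^{q_0}. For 0 ≤ j ≤ k define c_j(u) ∈ ℝ^{q_1} coordinatewise by c_j(u)_i = Σ_{p ∈ W_j(G,u)} Π_{l=0}^{j} κ(ψ_0(p_l), z_i^{(k+1−j+l)}). Then for every 1 ≤ j ≤ k and every vertex u, c_j(u) = b_j(u) ⊙ Σ_{v ∈ N(u)} c_{j−1}(v), where ⊙ is the entrywise (Hadamard) product and b_j(u) ∈ ℝ^{q_1} has entries b_j(u)_i = κ(ψ_0(u), z_i^{(k+1−j)}). -/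

import Mathlib

/-!
A walk of length `m + 1` from `u` is `u` followed by a walk of length `m` from a neighbor `v` of `u`
(`sum_walks_succ`). In `c_{m+1}(u)_i` the factor at position `0` is the same for all walks, namely
`κ(ψ₀(u), z_i^{(k-m)})`. The factor at position `l + 1` is the factor at position `l` of the
shortened walk in `c_m(v)_i`, since the anchor index `k + 1 - j + l` is unchanged when `j` and `l`
both drop by one.
-/

open Finset

/-- A walk of length `k` starting at `u`, encoded as a function `Fin (k+1) → V`
with consecutive vertices adjacent. -/
def walks {V : Type*} (G : SimpleGraph V) [Fintype V] [DecidableEq V]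
    [DecidableRel G.Adj] (k : ℕ) (u : V) : Finset (Fin (k+1) → V) :=
  Finset.univ.filter fun p => p 0 = u ∧ ∀ j : Fin k, G.Adj (p j.castSucc) (p j.succ)

open scoped Classical in
/-- The Dirac kernel. -/
noncomputable def dirac {α : Type*} (x y : α) : ℝ := if x = y then 1 else 0

/-- The walk kernel `κ_walk^{(k)}`. -/
noncomputable def walkKernel {V V' S : Type*} (G : SimpleGraph V) [Fintype V]
    [DecidableEq V] [DecidableRel G.Adj] (a : V → S)
    (G' : SimpleGraph V') [Fintype V'] [DecidableEq V'] [DecidableRel G'.Adj]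
    (a' : V' → S) (k : ℕ) (u : V) (u' : V') : ℝ :=
  ∑ p ∈ walks G k u, ∑ p' ∈ walks G' k u', dirac (a ∘ p) (a' ∘ p')

/-- The type of depth-`k` Weisfeiler-Lehman labels over an attribute set `S`. -/
def wlLabelType (S : Type u) : ℕ → Type u
  | 0 => S
  | k+1 => wlLabelType S k × Multiset (wlLabelType S k)

/-- The depth-`k` Weisfeiler-Lehman label of a vertex. -/
def wlLabel {V : Type*} {S : Type*} (G : SimpleGraph V) [Fintype V]
    [DecidableRel G.Adj] (a : V → S) : (k : ℕ) → V → wlLabelType S k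
  | 0, u => a u
  | k+1, u => (wlLabel G a k u, (G.neighborFinset u).val.map (wlLabel G a k))

/-- `R` is an exact matching of the neighborhoods of `u` and `u'`. -/
def ExactMatching {V V' S : Type*} (G : SimpleGraph V) [Fintype V]
    [DecidableRel G.Adj] (a : V → S)
    (G' : SimpleGraph V') [Fintype V'] [DecidableRel G'.Adj] (a' : V' → S)
    (u : V) (u' : V') (R : Finset (V × V')) : Prop :=
  (∀ e ∈ R, e.1 ∈ G.neighborFinset u ∧ e.2 ∈ G'.neighborFinset u') ∧
  R.card = (G.neighborFinset u).card ∧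
  R.card = (G'.neighborFinset u').card ∧
  (∀ e ∈ R, ∀ f ∈ R, (e.1 = f.1 ↔ e.2 = f.2)) ∧
  (∀ e ∈ R, a e.1 = a' e.2)

/-- The Gaussian kernel `κ(x,y) = exp(−(α/2)‖x − y‖²)` on `ℝ^{q₀}`. -/
noncomputable def gaussK {q0 : ℕ} (α : ℝ) (x y : EuclideanSpace ℝ (Fin q0)) : ℝ :=
  Real.exp (-(α/2) * ‖x - y‖^2)

/-- The `i`-th coordinate of `c_j(u)`:
`c_j(u)_i = Σ_{p ∈ W_j(G,u)} Π_{l=0}^{j} κ(ψ₀(p_l), z_i^{(k+1−j+l)})`, where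
`z i : Fin (k+1) → ℝ^{q₀}` is the `i`-th anchor point (0-indexed, so the 1-indexed
component `z_i^{(m)}` is `z i ⟨m-1, _⟩`). -/
noncomputable def cMap {V : Type*} {q0 q1 k : ℕ} (G : SimpleGraph V) [Fintype V]
    [DecidableEq V] [DecidableRel G.Adj] (ψ0 : V → EuclideanSpace ℝ (Fin q0))
    (α : ℝ) (z : Fin q1 → Fin (k+1) → EuclideanSpace ℝ (Fin q0))
    (j : ℕ) (hj : j ≤ k) (u : V) (i : Fin q1) : ℝ :=
  ∑ p ∈ walks G j u, ∏ l : Fin (j+1),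
    gaussK α (ψ0 (p l)) (z i ⟨k - j + l.val, by have := l.isLt; omega⟩)

/-- A sum over the walks of length `m + 1` from `u` splits according to the second vertex. -/
theorem sum_walks_succ {V : Type*} (G : SimpleGraph V) [Fintype V] [DecidableEq V]
    [DecidableRel G.Adj] (m : ℕ) (u : V) (f : (Fin (m + 2) → V) → ℝ) :
    ∑ p ∈ walks G (m + 1) u, f p =
      ∑ v ∈ G.neighborFinset u, ∑ q ∈ walks G m v, f (Fin.cons u q) := by
  rw [Finset.sum_sigma']
  refine Finset.sum_bij' (fun p _ => (⟨p 1, Fin.tail p⟩ : (_ : V) × (Fin (m + 1) → V)))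
    (fun x _ => Fin.cons u x.2) ?_ ?_ ?_ ?_ ?_
  · intro p hp
    simp only [walks, Finset.mem_filter, Finset.mem_univ, true_and] at hp
    obtain ⟨rfl, h⟩ := hp
    simp only [walks, Finset.mem_sigma, SimpleGraph.mem_neighborFinset, Finset.mem_filter,
      Finset.mem_univ, true_and]
    exact ⟨h 0, rfl, fun l => h l.succ⟩
  · rintro ⟨v, q⟩ hx
    simp only [walks, Finset.mem_sigma, SimpleGraph.mem_neighborFinset, Finset.mem_filter,
      Finset.mem_univ, true_and] at hx
    obtain ⟨ha, rfl, h⟩ := hx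
    simp only [walks, Finset.mem_filter, Finset.mem_univ, true_and]
    exact ⟨rfl, fun l => Fin.cases ha h l⟩
  · intro p hp
    simp only [walks, Finset.mem_filter, Finset.mem_univ, true_and] at hp
    obtain ⟨rfl, -⟩ := hp
    exact Fin.cons_self_tail p
  · rintro ⟨v, q⟩ hx
    simp only [walks, Finset.mem_sigma, Finset.mem_filter, Finset.mem_univ, true_and] at hx
    obtain ⟨-, rfl, -⟩ := hx
    rfl
  · intro p hp
    simp only [walks, Finset.mem_filter, Finset.mem_univ, true_and] at hp
    obtain ⟨rfl, -⟩ := hp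
    exact congrArg f (Fin.cons_self_tail p).symm

/-- For every `1 ≤ j ≤ k` and every vertex `u`,
`c_j(u) = b_j(u) ⊙ Σ_{v ∈ N(u)} c_{j−1}(v)`, where `b_j(u)_i = κ(ψ₀(u), z_i^{(k+1−j)})`. -/
theorem statement8 {V : Type*} {q0 q1 k : ℕ} (G : SimpleGraph V) [Fintype V]
    [DecidableEq V] [DecidableRel G.Adj] (ψ0 : V → EuclideanSpace ℝ (Fin q0))
    (α : ℝ) (hα : 0 < α) (z : Fin q1 → Fin (k+1) → EuclideanSpace ℝ (Fin q0))
    (hk : 1 ≤ k) (j : ℕ) (hj1 : 1 ≤ j) (hj : j ≤ k) (u : V) (i : Fin q1) :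
    cMap G ψ0 α z j hj u i =
      gaussK α (ψ0 u) (z i ⟨k - j, by omega⟩) *
        ∑ v ∈ G.neighborFinset u, cMap G ψ0 α z (j-1) (by omega) v i := by
  obtain ⟨m, rfl⟩ : ∃ m, j = m + 1 := ⟨j - 1, by omega⟩
  simp only [cMap, Nat.add_sub_cancel]
  rw [sum_walks_succ, Finset.mul_sum]
  refine Finset.sum_congr rfl fun v _ => ?_
  rw [Finset.mul_sum]
  refine Finset.sum_congr rfl fun q _ => ?_
  rw [Fin.prod_univ_succ]
  congr 1
  refine Finset.prod_congr rfl fun l _ => ?_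
  have hidx : k - (m + 1) + (l.succ : Fin (m + 2)).val = k - m + l.val := by
    rw [Fin.val_succ]; omega
  simp only [Fin.cons_succ, hidx]
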